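/- Let N ≥ 3, set 2⋆ = 2N/(N−2) and N' = N/(N−1). Let ψ : [0,∞) → ℝ be infinitely differentiable with ψ(0) = 0, ψ'(0) = 1, ψ(r) > 0 for r > 0, and ψ''(r) ≥ 0 for all r > 0, and define J(ϱ) = ( ψ( (N ϱ/ω_N)^{1/N} ) / (N ϱ/ω_N)^{1/N} )^{N−1} for ϱ > 0. Let φ : (0,∞) → [0,∞) be nonincreasing and locally absolutely continuous with lim_{ϱ→∞} φ(ϱ) = 0, with ∫₀^∞ φ'(ϱ)² ϱ^{2/N'} J(ϱ) dϱ < ∞ and 0 < ∫₀^∞ φ(ϱ)² ϱ^{−2/N} J(ϱ) dϱ < ∞. Define δ(φ) = inf over a ≥ 0 of ‖φ(ϱ) − a·ϱ^{−1/2⋆}‖_{L^{2⋆,∞}(0,∞)} / ( ∫₀^∞ φ(ϱ)² ϱ^{−2/N} J(ϱ) dϱ )^{1/2}, where ‖g‖_{L^{2⋆,∞}(0,∞)} = sup_{t>0} t · ( Lebesgue measure of {ϱ > 0 : |g(ϱ)| > t} )^{1/2⋆}. Then (1/2⋆)² · ( ∫₀^∞ φ(ϱ)² ϱ^{−2/N}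 J(ϱ) dϱ ) · ( 1 + (δ(φ)/2)⁴ ) ≤ ∫₀^∞ φ'(ϱ)² ϱ^{2/N'} J(ϱ) dϱ. -/

import Mathlib

open MeasureTheory
open scoped ENNReal

/-- Surface area of the unit sphere `S^{N-1} ⊂ ℝ^N`. -/
noncomputable def omegaN (N : ℕ) : ℝ :=
  2 * Real.pi ^ ((N : ℝ) / 2) / Real.Gamma ((N : ℝ) / 2)

/-- The Jacobian distortion factor `J(ϱ) = (ψ(r)/r)^{N-1}` with `r = (Nϱ/ω_N)^{1/N}`. -/
noncomputable def Jfun (N : ℕ) (ψ : ℝ → ℝ) (t : ℝ) : ℝ :=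
  if t = 0 then 1 else
    (ψ (((N : ℝ) * t / omegaN N) ^ ((1:ℝ) / (N : ℝ))) /
      (((N : ℝ) * t / omegaN N) ^ ((1:ℝ) / (N : ℝ)))) ^ (N - 1)

/-- The critical Sobolev exponent `2⋆ = 2N/(N-2)`. -/
noncomputable def twoStar (N : ℕ) : ℝ := 2 * (N : ℝ) / ((N : ℝ) - 2)

/-- The Hölder conjugate `N' = N/(N-1)`. -/
noncomputable def Nprime (N : ℕ) : ℝ := (N : ℝ) / ((N : ℝ) - 1)

/-- The weak (Marcinkiewicz) Lorentz quasinorm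
`‖g‖_{L^{p,∞}(0,∞)} = sup_{t>0} t · |{ϱ > 0 : |g(ϱ)| > t}|^{1/p}`. -/
noncomputable def weakLorentz (p : ℝ) (g : ℝ → ℝ) : ℝ≥0∞ :=
  ⨆ t ∈ Set.Ioi (0:ℝ),
    ENNReal.ofReal t * (volume {ϱ : ℝ | 0 < ϱ ∧ t < |g ϱ|}) ^ ((1:ℝ) / p)

/-!
Write `α = 1/2⋆`, `A = ∫ φ² x^(2α-1) J`, `G = ∫ φ'² x^(2α+1) J`, and let `B = x^(2α) J φ² / 2`.
Since `J` is nondecreasing, `B' ≥ φ (x φ' + α φ) x^(2α-1) J` almost everywhere, and `B` cannot stay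
away from `0` at infinity because `B / x` is integrable. Hence
`B(s) ≤ -∫_s^∞ φ (x φ' + α φ) x^(2α-1) J` for every `s > 0`. Letting `s → 0` and expanding the
square gives `∫ (x φ' + α φ)² x^(2α-1) J ≤ G - α² A`, so by Cauchy–Schwarz
`B(s)² ≤ A (G - α² A)`. As `J ≥ 1`, this is a pointwise bound `(x^α |φ|)⁴ ≤ 4 A (G - α² A)`, hence a
weak Lorentz bound on `φ` itself: the competitor `a = 0` in the infimum is already enough.
-/

open Set Filter Topology

theorem absolutelyContinuousOnInterval_congr {f g : ℝ → ℝ} {a b : ℝ}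
    (hf : AbsolutelyContinuousOnInterval f a b) (hfg : EqOn f g (uIcc a b)) :
    AbsolutelyContinuousOnInterval g a b := by
  refine Tendsto.congr' (eventually_inf_principal.2 (.of_forall fun E hE => ?_)) hf
  exact Finset.sum_congr rfl fun i hi => by rw [hfg (hE.1 i hi).1, hfg (hE.1 i hi).2]

theorem intervalIntegrable_of_sq_mul_of_le_weight {f w : ℝ → ℝ} {a b c : ℝ} (hab : a ≤ b)
    (hf : AEStronglyMeasurable f (volume.restrict (Ioc a b))) (hc : 0 < c)
    (hw : ∀ x ∈ Ioc a b, c ≤ w x) (hfw : IntegrableOn (fun x => f x ^ 2 * w x) (Ioc a b)) :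
    IntervalIntegrable f volume a b := by
  rw [intervalIntegrable_iff_integrableOn_Ioc_of_le hab]
  have hf_sq : IntegrableOn (fun x => f x ^ 2) (Ioc a b) := by
    refine (hfw.const_mul c⁻¹).mono' (hf.pow 2) ?_
    filter_upwards [ae_restrict_mem measurableSet_Ioc] with x hx
    rw [Real.norm_of_nonneg (sq_nonneg _), le_inv_mul_iff₀ hc, mul_comm c]
    gcongr
    exact hw x hx
  exact ((memLp_two_iff_integrable_sq hf).2 hf_sq).integrable one_le_two

theorem sq_integral_mul_le {Ω : Type*} [MeasurableSpace Ω] {μ : Measure Ω} {f g : Ω → ℝ}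
    (hf : MemLp f 2 μ) (hg : MemLp g 2 μ) :
    (∫ x, f x * g x ∂μ) ^ 2 ≤ (∫ x, f x ^ 2 ∂μ) * ∫ x, g x ^ 2 ∂μ := by
  have hfg : Integrable (fun x => f x * g x) μ := hf.integrable_mul hg
  have quadratic_nonneg (s : ℝ) : 0 ≤ (∫ x, f x ^ 2 ∂μ) * (s * s) +
      2 * (∫ x, f x * g x ∂μ) * s + ∫ x, g x ^ 2 ∂μ := by
    calc 0 ≤ ∫ x, (s * f x + g x) ^ 2 ∂μ := by positivity
      _ = ∫ x, (s * s) * f x ^ 2 + (2 * s) * (f x * g x) + g x ^ 2 ∂μ := by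
        congr with x; ring
      _ = _ := by
        rw [integral_add ((hf.integrable_sq.const_mul _).fun_add (hfg.const_mul _))
            hg.integrable_sq,
          integral_add (hf.integrable_sq.const_mul _) (hfg.const_mul _), integral_const_mul,
          integral_const_mul]
        ring
  have := discrim_le_zero quadratic_nonneg
  rw [discrim] at this
  linarith

theorem not_integrableOn_Ioi_inv_mul_of_eventually_le {W : ℝ → ℝ} {a ε : ℝ} (hε : 0 < ε)
    (hW : ∀ᶠ x in atTop, ε ≤ W x) : ¬ IntegrableOn (fun x => x⁻¹ * W x) (Ioi a) := by
  intro h_int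
  obtain ⟨b, hb⟩ := eventually_atTop.1 (hW.and (eventually_ge_atTop (max a 1)))
  have hab : a ≤ b := (le_max_left _ _).trans (hb b le_rfl).2
  refine not_integrableOn_Ioi_inv (a := b) <|
    ((h_int.mono_set (Ioi_subset_Ioi hab)).const_mul ε⁻¹).mono' (by fun_prop) ?_
  filter_upwards [ae_restrict_mem measurableSet_Ioi] with x hx
  obtain ⟨hεW, hx1⟩ := hb x (le_of_lt hx)
  have hx0 : 0 < x := one_pos.trans_le ((le_max_right _ _).trans hx1)
  rw [Real.norm_of_nonneg (by positivity), le_inv_mul_iff₀ hε, mul_comm]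
  gcongr

-- Otherwise `W` would stay above a positive constant at infinity, and `W x / x` would not be
-- integrable.
theorem add_integral_Ioi_nonpos_of_integral_le_sub {W v : ℝ → ℝ} {a : ℝ}
    (hv : IntegrableOn v (Ioi a)) (hW : IntegrableOn (fun x => x⁻¹ * W x) (Ioi a))
    (hvW : ∀ b, a ≤ b → ∫ x in a..b, v x ≤ W b - W a) :
    W a + ∫ x in Ioi a, v x ≤ 0 := by
  by_contra! h_pos
  refine not_integrableOn_Ioi_inv_mul_of_eventually_le (half_pos h_pos) ?_ hW
  have h_tendsto := (intervalIntegral_tendsto_integral_Ioi a hv tendsto_id).const_add (W a)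
  filter_upwards [h_tendsto.eventually (lt_mem_nhds (half_lt_self h_pos)), eventually_ge_atTop a]
    with b hb hab
  have := hvW b hab
  simp only [id_eq] at hb
  linarith

theorem setIntegral_Ioi_nonpos_of_forall_gt {μ : Measure ℝ} {v : ℝ → ℝ} {c : ℝ}
    (hv : IntegrableOn v (Ioi c) μ) (h : ∀ a, c < a → ∫ x in Ioi a, v x ∂μ ≤ 0) :
    ∫ x in Ioi c, v x ∂μ ≤ 0 := by
  have hcover : AECover (μ.restrict (Ioi c)) (𝓝[>] c) Ioi :=
    aecover_Ioi_of_Ioi (tendsto_id.mono_left nhdsWithin_le_nhds)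
  refine le_of_tendsto (hcover.integral_tendsto_of_countably_generated hv) ?_
  filter_upwards [self_mem_nhdsWithin] with a (ha : c < a)
  rw [Measure.restrict_restrict measurableSet_Ioi, inter_eq_left.2 (Ioi_subset_Ioi ha.le)]
  exact h a ha

/-- Local absolute continuity on `(0, ∞)`: absolute continuity on every compact subinterval. -/
def LocallyACOnIoi (f : ℝ → ℝ) : Prop :=
  ∀ ⦃a b : ℝ⦄, 0 < a → a ≤ b → AbsolutelyContinuousOnInterval f a b

theorem LocallyACOnIoi.continuousOn {f : ℝ → ℝ} (hf : LocallyACOnIoi f) :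
    ContinuousOn f (Ioi 0) := by
  intro x (hx : 0 < x)
  have hcont := (hf (half_pos hx) (by linarith : x / 2 ≤ x + 1)).continuousOn
  rw [uIcc_of_le (by linarith)] at hcont
  exact (hcont.continuousAt (Icc_mem_nhds (by linarith) (by linarith))).continuousWithinAt

theorem LocallyACOnIoi.mul {f g : ℝ → ℝ} (hf : LocallyACOnIoi f) (hg : LocallyACOnIoi g) :
    LocallyACOnIoi (fun x => f x * g x) :=
  fun _ _ ha hab => (hf ha hab).fun_mul (hg ha hab)

theorem LocallyACOnIoi.of_contDiffOn {f : ℝ → ℝ} (hf : ContDiffOn ℝ 1 f (Ioi 0)) :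
    LocallyACOnIoi f :=
  fun _ _ ha hab =>
    (hf.mono (by grind [uIcc_of_le hab])).absolutelyContinuousOnInterval

theorem LocallyACOnIoi.of_sub_eq_integral {f f' : ℝ → ℝ}
    (hf' : ∀ a b : ℝ, 0 < a → a ≤ b → IntervalIntegrable f' volume a b)
    (h : ∀ a b : ℝ, 0 < a → a ≤ b → f b - f a = ∫ t in a..b, f' t) : LocallyACOnIoi f := by
  intro a b ha hab
  have h_primitive :=
    (hf' a b ha hab).absolutelyContinuousOnInterval_intervalIntegral (c := a) left_mem_uIcc
  have h_const : AbsolutelyContinuousOnInterval (fun _ : ℝ => f a) a b :=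
    (contDiff_const (n := 1)).contDiffOn.absolutelyContinuousOnInterval
  refine absolutelyContinuousOnInterval_congr (h_const.fun_add h_primitive) fun x hx => ?_
  rw [uIcc_of_le hab] at hx
  simp [← h a x ha hx.1]

section WeightedHardy

variable {α : ℝ} {J φ : ℝ → ℝ}

/-- The measure `x ^ (2α - 1) J(x) dx` on `(0, ∞)`. In `L²` of this measure the weighted Hardy
inequality reads `α ‖φ‖ ≤ ‖x φ'‖`. The density is truncated at `0` by `ENNReal.ofReal`, so `J`
should be nonnegative on `(0, ∞)`. -/
noncomputable def hardyMeasure (α : ℝ) (J : ℝ → ℝ) : Measure ℝ :=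
  (volume.restrict (Ioi 0)).withDensity fun x => ENNReal.ofReal (x ^ (2 * α - 1) * J x)

/-- The defect `x φ' + α φ`, which vanishes exactly on the multiples of the virtual extremal
`x ^ (-α)` of the Hardy inequality. -/
noncomputable def eulerDefect (α : ℝ) (φ : ℝ → ℝ) (x : ℝ) : ℝ :=
  x * deriv φ x + α * φ x

/-- The boundary term `x ^ (2α) J φ² / 2` produced by integrating `φ (x φ' + α φ)` by parts
against `hardyMeasure α J`. -/
noncomputable def boundaryTerm (α : ℝ) (J φ : ℝ → ℝ) (x : ℝ) : ℝ :=
  x ^ (2 * α) * J x * φ x ^ 2 / 2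

theorem rpow_two_mul_eq {x : ℝ} (hx : 0 < x) (α : ℝ) : x ^ (2 * α) = x * x ^ (2 * α - 1) := by
  rw [Real.rpow_sub_one hx.ne', mul_div_cancel₀ _ hx.ne']

theorem aemeasurable_hardyDensity (hJm : MonotoneOn J (Ioi 0)) :
    AEMeasurable (fun x => ENNReal.ofReal (x ^ (2 * α - 1) * J x)) (volume.restrict (Ioi 0)) := by
  have hJ := aemeasurable_restrict_of_monotoneOn (μ := volume) measurableSet_Ioi hJm
  fun_prop

theorem integrable_hardyMeasure_iff (hJ0 : ∀ x, 0 < x → 0 ≤ J x) (hJm : MonotoneOn J (Ioi 0))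
    {f : ℝ → ℝ} : Integrable f (hardyMeasure α J) ↔
      IntegrableOn (fun x => f x * x ^ (2 * α - 1) * J x) (Ioi 0) := by
  rw [hardyMeasure, integrable_withDensity_iff_integrable_smul₀' (aemeasurable_hardyDensity hJm)
    (by simp)]
  refine integrable_congr ?_
  filter_upwards [ae_restrict_mem measurableSet_Ioi] with x (hx : 0 < x)
  have hJx := hJ0 x hx
  rw [ENNReal.toReal_ofReal (by positivity), smul_eq_mul]
  ring

theorem setIntegral_hardyMeasure (hJ0 : ∀ x, 0 < x → 0 ≤ J x) (hJm : MonotoneOn J (Ioi 0))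
    (f : ℝ → ℝ) {s : Set ℝ} (hs : MeasurableSet s) :
    ∫ x in s, f x ∂hardyMeasure α J = ∫ x in s ∩ Ioi 0, f x * x ^ (2 * α - 1) * J x := by
  rw [hardyMeasure, setIntegral_withDensity_eq_setIntegral_toReal_smul₀
    (aemeasurable_hardyDensity hJm).restrict (by simp) f hs, Measure.restrict_restrict hs]
  refine setIntegral_congr_fun (hs.inter measurableSet_Ioi) fun x hx => ?_
  have hx0 : 0 < x := hx.2
  have hJx := hJ0 x hx0
  simp only [smul_eq_mul]
  rw [ENNReal.toReal_ofReal (by positivity)]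
  ring

theorem integral_hardyMeasure (hJ0 : ∀ x, 0 < x → 0 ≤ J x) (hJm : MonotoneOn J (Ioi 0))
    (f : ℝ → ℝ) :
    ∫ x, f x ∂hardyMeasure α J = ∫ x in Ioi 0, f x * x ^ (2 * α - 1) * J x := by
  rw [← setIntegral_univ, setIntegral_hardyMeasure hJ0 hJm f .univ, univ_inter]

theorem aestronglyMeasurable_hardyMeasure {f : ℝ → ℝ}
    (hf : AEStronglyMeasurable f (volume.restrict (Ioi 0))) :
    AEStronglyMeasurable f (hardyMeasure α J) :=
  hf.mono_ac (withDensity_absolutelyContinuous _ _)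

theorem boundaryTerm_nonneg {x : ℝ} (hx : 0 ≤ x) (hJ : 0 ≤ J x) : 0 ≤ boundaryTerm α J φ x := by
  unfold boundaryTerm
  positivity

theorem mul_eulerDefect_le_deriv_boundaryTerm {x : ℝ} (hx : 0 < x)
    (hφ : DifferentiableAt ℝ φ x) (hJ : DifferentiableAt ℝ J x) (hJ' : 0 ≤ deriv J x) :
    φ x * eulerDefect α φ x * x ^ (2 * α - 1) * J x ≤ deriv (boundaryTerm α J φ) x := by
  have h_deriv : deriv (boundaryTerm α J φ) x =
      φ x * eulerDefect α φ x * x ^ (2 * α - 1) * J x +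
        x ^ (2 * α) * deriv J x * φ x ^ 2 / 2 := by
    refine ((((Real.hasDerivAt_rpow_const (p := 2 * α) (.inl hx.ne')).mul hJ.hasDerivAt).mul
      (hφ.hasDerivAt.pow 2)).div_const 2).deriv.trans ?_
    simp only [Pi.mul_apply, Pi.pow_apply, eulerDefect, rpow_two_mul_eq hx]
    push_cast
    ring
  rw [h_deriv, le_add_iff_nonneg_right]
  positivity

theorem LocallyACOnIoi.boundaryTerm (hJ : LocallyACOnIoi J) (hφ : LocallyACOnIoi φ) :
    LocallyACOnIoi (boundaryTerm α J φ) := by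
  have h_half_rpow : LocallyACOnIoi fun x => x ^ (2 * α) / 2 :=
    .of_contDiffOn fun x (hx : 0 < x) =>
      ((Real.contDiffAt_rpow_const_of_ne hx.ne').div_const 2).contDiffWithinAt
  convert (h_half_rpow.mul hJ).mul (hφ.mul hφ) using 2 with x
  rw [_root_.boundaryTerm]
  ring

theorem integral_mul_eulerDefect_le_boundaryTerm_sub (hJm : MonotoneOn J (Ioi 0))
    (hJ : LocallyACOnIoi J) (hφ : LocallyACOnIoi φ) {a b : ℝ} (ha : 0 < a) (hab : a ≤ b)
    (h_int : IntegrableOn (fun x => φ x * eulerDefect α φ x * x ^ (2 * α - 1) * J x) (Ioi 0)) :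
    ∫ x in a..b, φ x * eulerDefect α φ x * x ^ (2 * α - 1) * J x ≤
      boundaryTerm α J φ b - boundaryTerm α J φ a := by
  have hW := hJ.boundaryTerm (α := α) hφ ha hab
  have h_sub : Ioc a b ⊆ Ioi 0 := fun x hx => ha.trans hx.1
  rw [← hW.integral_deriv_eq_sub]
  refine intervalIntegral.integral_mono_ae_restrict hab
    ((intervalIntegrable_iff_integrableOn_Ioc_of_le hab).2 (h_int.mono_set h_sub))
    hW.intervalIntegrable_deriv ?_
  rw [EventuallyLE, ae_restrict_iff' measurableSet_Icc]
  filter_upwards [(hφ ha hab).ae_differentiableAt, (hJ ha hab).ae_differentiableAt]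
    with x hφx hJx hx
  have hx0 : 0 < x := ha.trans_le hx.1
  rw [← uIcc_of_le hab] at hx
  refine mul_eulerDefect_le_deriv_boundaryTerm hx0 (hφx hx) (hJx hx) ?_
  rw [← derivWithin_of_mem_nhds (Ioi_mem_nhds hx0)]
  exact hJm.derivWithin_nonneg

theorem inv_mul_boundaryTerm {x : ℝ} (hx : 0 < x) :
    x⁻¹ * boundaryTerm α J φ x = φ x ^ 2 * x ^ (2 * α - 1) * J x / 2 := by
  rw [boundaryTerm, rpow_two_mul_eq hx]
  field_simp

/-- The hypotheses of the weighted Hardy inequality with exponent `α`, weight `J` and function `φ`.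
Membership of `φ` and `x φ'` in `L²` of `hardyMeasure α J` encodes the finiteness of the two
energies. -/
structure HardyAdmissible (α : ℝ) (J φ : ℝ → ℝ) : Prop where
  weight_nonneg : ∀ x, 0 < x → 0 ≤ J x
  weight_mono : MonotoneOn J (Ioi 0)
  weight_ac : LocallyACOnIoi J
  ac : LocallyACOnIoi φ
  memLp : MemLp φ 2 (hardyMeasure α J)
  memLp_deriv : MemLp (fun x => x * deriv φ x) 2 (hardyMeasure α J)

namespace HardyAdmissible

theorem memLp_eulerDefect (h : HardyAdmissible α J φ) :
    MemLp (eulerDefect α φ) 2 (hardyMeasure α J) :=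
  h.memLp_deriv.add (h.memLp.const_mul α)

theorem integrable_mul_eulerDefect (h : HardyAdmissible α J φ) :
    Integrable (fun x => φ x * eulerDefect α φ x) (hardyMeasure α J) :=
  h.memLp.integrable_mul h.memLp_eulerDefect

theorem boundaryTerm_add_setIntegral_nonpos (h : HardyAdmissible α J φ) {a : ℝ} (ha : 0 < a) :
    boundaryTerm α J φ a + ∫ x in Ioi a, φ x * eulerDefect α φ x ∂hardyMeasure α J ≤ 0 := by
  have integrableOn_of_integrable {f : ℝ → ℝ} (hf : Integrable f (hardyMeasure α J)) :=
    (integrable_hardyMeasure_iff h.weight_nonneg h.weight_mono).1 hf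
  have h_sub : Ioi a ⊆ Ioi 0 := Ioi_subset_Ioi ha.le
  have h_int := integrableOn_of_integrable h.integrable_mul_eulerDefect
  have h_boundary : IntegrableOn (fun x => x⁻¹ * boundaryTerm α J φ x) (Ioi a) :=
    IntegrableOn.congr_fun
      (((integrableOn_of_integrable h.memLp.integrable_sq).mono_set h_sub).div_const 2)
      (fun x hx => (inv_mul_boundaryTerm (ha.trans hx)).symm) measurableSet_Ioi
  rw [setIntegral_hardyMeasure h.weight_nonneg h.weight_mono _ measurableSet_Ioi,
    inter_eq_left.2 h_sub]
  exact add_integral_Ioi_nonpos_of_integral_le_sub (h_int.mono_set h_sub) h_boundary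
    fun b hab => integral_mul_eulerDefect_le_boundaryTerm_sub h.weight_mono h.weight_ac h.ac
      ha hab h_int

theorem integral_mul_eulerDefect_nonpos (h : HardyAdmissible α J φ) :
    ∫ x, φ x * eulerDefect α φ x ∂hardyMeasure α J ≤ 0 := by
  have h_restrict : (hardyMeasure α J).restrict (Ioi 0) = hardyMeasure α J := by
    rw [hardyMeasure, restrict_withDensity measurableSet_Ioi,
      Measure.restrict_restrict measurableSet_Ioi, inter_self]
  rw [← h_restrict]
  refine setIntegral_Ioi_nonpos_of_forall_gt h.integrable_mul_eulerDefect.integrableOn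
    fun a ha => ?_
  have h_add := h.boundaryTerm_add_setIntegral_nonpos ha
  have h_nonneg : 0 ≤ boundaryTerm α J φ a := boundaryTerm_nonneg ha.le (h.weight_nonneg a ha)
  linarith

theorem integral_sq_eulerDefect (h : HardyAdmissible α J φ) :
    ∫ x, eulerDefect α φ x ^ 2 ∂hardyMeasure α J =
      ∫ x, (x * deriv φ x) ^ 2 ∂hardyMeasure α J - α ^ 2 * ∫ x, φ x ^ 2 ∂hardyMeasure α J +
        2 * α * ∫ x, φ x * eulerDefect α φ x ∂hardyMeasure α J := by
  have h_sq := h.memLp.integrable_sq.const_mul (α ^ 2)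
  have h_deriv_sq := h.memLp_deriv.integrable_sq
  have h_diff : Integrable (fun x => (x * deriv φ x) ^ 2 - α ^ 2 * φ x ^ 2) (hardyMeasure α J) :=
    h_deriv_sq.sub h_sq
  rw [← integral_const_mul, ← integral_const_mul, ← integral_sub h_deriv_sq h_sq,
    ← integral_add h_diff (h.integrable_mul_eulerDefect.const_mul _)]
  congr with x
  simp only [eulerDefect]
  ring

theorem integral_sq_eulerDefect_le (h : HardyAdmissible α J φ) (hα : 0 ≤ α) :
    ∫ x, eulerDefect α φ x ^ 2 ∂hardyMeasure α J ≤
      ∫ x, (x * deriv φ x) ^ 2 ∂hardyMeasure α J - α ^ 2 * ∫ x, φ x ^ 2 ∂hardyMeasure α J := by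
  rw [h.integral_sq_eulerDefect, add_le_iff_nonpos_right]
  exact mul_nonpos_of_nonneg_of_nonpos (by positivity) h.integral_mul_eulerDefect_nonpos

theorem sq_boundaryTerm_le (h : HardyAdmissible α J φ) {a : ℝ} (ha : 0 < a) :
    boundaryTerm α J φ a ^ 2 ≤
      (∫ x, φ x ^ 2 ∂hardyMeasure α J) * ∫ x, eulerDefect α φ x ^ 2 ∂hardyMeasure α J := by
  have h_add := h.boundaryTerm_add_setIntegral_nonpos ha
  have setIntegral_sq_le {f : ℝ → ℝ} (hf : MemLp f 2 (hardyMeasure α J)) :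
      ∫ x in Ioi a, f x ^ 2 ∂hardyMeasure α J ≤ ∫ x, f x ^ 2 ∂hardyMeasure α J :=
    setIntegral_le_integral hf.integrable_sq (.of_forall fun _ => sq_nonneg _)
  calc boundaryTerm α J φ a ^ 2
      ≤ (-∫ x in Ioi a, φ x * eulerDefect α φ x ∂hardyMeasure α J) ^ 2 :=
        pow_le_pow_left₀ (boundaryTerm_nonneg ha.le (h.weight_nonneg a ha)) (by linarith) 2
    _ ≤ (∫ x in Ioi a, φ x ^ 2 ∂hardyMeasure α J) *
          ∫ x in Ioi a, eulerDefect α φ x ^ 2 ∂hardyMeasure α J := by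
        rw [neg_sq]
        exact sq_integral_mul_le (h.memLp.restrict _) (h.memLp_eulerDefect.restrict _)
    _ ≤ _ := mul_le_mul (setIntegral_sq_le h.memLp) (setIntegral_sq_le h.memLp_eulerDefect)
        (by positivity) (by positivity)

theorem pow_four_rpow_mul_abs_le (h : HardyAdmissible α J φ) (hα : 0 ≤ α) {x : ℝ} (hx : 0 < x)
    (hJ : 1 ≤ J x) :
    (x ^ α * |φ x|) ^ 4 ≤ 4 * (∫ y, φ y ^ 2 ∂hardyMeasure α J) *
      (∫ y, (y * deriv φ y) ^ 2 ∂hardyMeasure α J - α ^ 2 * ∫ y, φ y ^ 2 ∂hardyMeasure α J) := by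
  have h_sq : (x ^ α * |φ x|) ^ 2 ≤ 2 * boundaryTerm α J φ x := by
    calc (x ^ α * |φ x|) ^ 2 = x ^ (2 * α) * 1 * φ x ^ 2 := by
          rw [mul_pow, sq_abs, mul_one, mul_comm 2 α, Real.rpow_mul hx.le, Real.rpow_two]
      _ ≤ x ^ (2 * α) * J x * φ x ^ 2 := by gcongr
      _ = 2 * boundaryTerm α J φ x := by rw [boundaryTerm]; ring
  calc (x ^ α * |φ x|) ^ 4 = ((x ^ α * |φ x|) ^ 2) ^ 2 := by ring
    _ ≤ (2 * boundaryTerm α J φ x) ^ 2 := by gcongr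
    _ = 4 * boundaryTerm α J φ x ^ 2 := by ring
    _ ≤ 4 * ((∫ y, φ y ^ 2 ∂hardyMeasure α J) *
          ∫ y, eulerDefect α φ y ^ 2 ∂hardyMeasure α J) := by
        gcongr
        exact h.sq_boundaryTerm_le hx
    _ ≤ _ := by
        rw [← mul_assoc]
        gcongr
        exact h.integral_sq_eulerDefect_le hα

end HardyAdmissible

theorem sq_mul_mul_rpow {x : ℝ} (hx : 0 < x) (α y : ℝ) :
    (x * y) ^ 2 * x ^ (2 * α - 1) = y ^ 2 * x ^ (1 + 2 * α) := by
  rw [Real.rpow_add hx, Real.rpow_one, rpow_two_mul_eq hx]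
  ring

theorem locallyACOnIoi_of_integrableOn_sq_deriv {c : ℝ} (hc : 0 ≤ c)
    (hJ1 : ∀ x, 0 < x → 1 ≤ J x)
    (hφ : ∀ a b : ℝ, 0 < a → a ≤ b → φ b - φ a = ∫ t in a..b, deriv φ t)
    (hφ' : IntegrableOn (fun x => deriv φ x ^ 2 * x ^ c * J x) (Ioi 0)) :
    LocallyACOnIoi φ := by
  refine .of_sub_eq_integral (fun a b ha hab => ?_) hφ
  refine intervalIntegrable_of_sq_mul_of_le_weight (w := fun x => x ^ c * J x) hab
    (by fun_prop) (by positivity : 0 < a ^ c) (fun x hx => ?_) ?_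
  · have hJx := hJ1 x (ha.trans hx.1)
    calc a ^ c ≤ x ^ c := Real.rpow_le_rpow ha.le hx.1.le hc
      _ ≤ x ^ c * J x := le_mul_of_one_le_right (by have := ha.trans hx.1; positivity) hJx
  · simpa only [mul_assoc] using hφ'.mono_set fun x hx => ha.trans hx.1

theorem HardyAdmissible.of_integrableOn (hα : 0 ≤ α) (hJ1 : ∀ x, 0 < x → 1 ≤ J x)
    (hJm : MonotoneOn J (Ioi 0)) (hJ : LocallyACOnIoi J)
    (hφ : ∀ a b : ℝ, 0 < a → a ≤ b → φ b - φ a = ∫ t in a..b, deriv φ t)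
    (hφ' : IntegrableOn (fun x => deriv φ x ^ 2 * x ^ (1 + 2 * α) * J x) (Ioi 0))
    (hφ2 : IntegrableOn (fun x => φ x ^ 2 * x ^ (2 * α - 1) * J x) (Ioi 0)) :
    HardyAdmissible α J φ := by
  have hJ0 : ∀ x, 0 < x → 0 ≤ J x := fun x hx => zero_le_one.trans (hJ1 x hx)
  have h_ac := locallyACOnIoi_of_integrableOn_sq_deriv (by positivity) hJ1 hφ hφ'
  have h_meas := aestronglyMeasurable_hardyMeasure (α := α) (J := J)
    (h_ac.continuousOn.aestronglyMeasurable measurableSet_Ioi)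
  refine ⟨hJ0, hJm, hJ, h_ac,
    (memLp_two_iff_integrable_sq h_meas).2 ((integrable_hardyMeasure_iff hJ0 hJm).2 hφ2),
    (memLp_two_iff_integrable_sq (by fun_prop)).2 ((integrable_hardyMeasure_iff hJ0 hJm).2 ?_)⟩
  exact hφ'.congr_fun (fun x hx => by simp only [sq_mul_mul_rpow hx]) measurableSet_Ioi

end WeightedHardy

theorem weakLorentz_le_ofReal {p K : ℝ} (hp : 0 < p) {φ : ℝ → ℝ}
    (h : ∀ x, 0 < x → x ^ (1 / p) * |φ x| ≤ K) : weakLorentz p φ ≤ ENNReal.ofReal K := by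
  have hK : 0 ≤ K := (by positivity : (0 : ℝ) ≤ 1 ^ (1 / p) * |φ 1|).trans (h 1 one_pos)
  refine iSup₂_le fun t (ht : 0 < t) => ?_
  have h_superlevel : {x : ℝ | 0 < x ∧ t < |φ x|} ⊆ Ioc 0 ((K / t) ^ p) := by
    rintro x ⟨hx, hxt⟩
    refine ⟨hx, (Real.rpow_inv_le_iff_of_pos hx.le (by positivity) hp).1 ?_⟩
    rw [← one_div, le_div_iff₀ ht]
    exact (mul_le_mul_of_nonneg_left hxt.le (by positivity)).trans (h x hx)
  calc ENNReal.ofReal t * volume {x : ℝ | 0 < x ∧ t < |φ x|} ^ (1 / p)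
      ≤ ENNReal.ofReal t * ENNReal.ofReal ((K / t) ^ p) ^ (1 / p) := by
        gcongr
        simpa using measure_mono (μ := volume) h_superlevel
    _ = ENNReal.ofReal K := by
        rw [ENNReal.ofReal_rpow_of_nonneg (by positivity) (by positivity), one_div,
          Real.rpow_rpow_inv (by positivity) hp.ne', ← ENNReal.ofReal_mul ht.le,
          mul_div_cancel₀ _ ht.ne']

theorem weakLorentz_pow_le_ofReal {p K : ℝ} (hp : 0 < p) {n : ℕ} (hn : n ≠ 0) {φ : ℝ → ℝ}
    (h : ∀ x, 0 < x → (x ^ (1 / p) * |φ x|) ^ n ≤ K) :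
    weakLorentz p φ ^ n ≤ ENNReal.ofReal K := by
  have hK : 0 ≤ K := (by positivity : (0 : ℝ) ≤ (1 ^ (1 / p) * |φ 1|) ^ n).trans (h 1 one_pos)
  have h_root : ∀ x, 0 < x → x ^ (1 / p) * |φ x| ≤ K ^ (n : ℝ)⁻¹ := fun x hx =>
    (Real.le_rpow_inv_iff_of_pos (by positivity) hK (by positivity)).2
      (by rw [Real.rpow_natCast]; exact h x hx)
  calc weakLorentz p φ ^ n ≤ ENNReal.ofReal (K ^ (n : ℝ)⁻¹) ^ n := by
        gcongr
        exact weakLorentz_le_ofReal hp h_root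
    _ = ENNReal.ofReal K := by
        rw [← ENNReal.ofReal_pow (by positivity), Real.rpow_inv_natCast_pow hK hn]

theorem hardy_stability_of_pow_four_le {α A G d : ℝ} (hα : α ^ 2 ≤ 4) (hA : 0 < A)
    (hd : d ^ 4 ≤ 4 * A * (G - α ^ 2 * A)) :
    α ^ 2 * A * (1 + (d / √A / 2) ^ 4) ≤ G := by
  have h_sqrt : √A ^ 4 = A ^ 2 := by
    rw [show 4 = 2 * 2 from rfl, pow_mul, Real.sq_sqrt hA.le]
  have h_deficit : α ^ 2 * A * (d / √A / 2) ^ 4 ≤ G - α ^ 2 * A := by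
    calc α ^ 2 * A * (d / √A / 2) ^ 4 = α ^ 2 * d ^ 4 / (16 * A) := by
          rw [div_pow, div_pow, h_sqrt]; field_simp; ring
      _ ≤ 4 * (4 * A * (G - α ^ 2 * A)) / (16 * A) := by gcongr
      _ = G - α ^ 2 * A := by field_simp; ring
  linarith

theorem weighted_hardy_stability {α : ℝ} {J φ : ℝ → ℝ} (hα : 0 < α) (hα2 : α ≤ 2)
    (hJ1 : ∀ x, 0 < x → 1 ≤ J x) (hJm : MonotoneOn J (Ioi 0)) (hJ : LocallyACOnIoi J)
    (hφ : ∀ a b : ℝ, 0 < a → a ≤ b → φ b - φ a = ∫ t in a..b, deriv φ t)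
    (hφ' : IntegrableOn (fun x => deriv φ x ^ 2 * x ^ (1 + 2 * α) * J x) (Ioi 0))
    (hφ2 : IntegrableOn (fun x => φ x ^ 2 * x ^ (2 * α - 1) * J x) (Ioi 0))
    (hpos : 0 < ∫ x in Ioi 0, φ x ^ 2 * x ^ (2 * α - 1) * J x)
    {d : ℝ≥0∞} (hd : d ≤ weakLorentz (1 / α) φ) :
    α ^ 2 * (∫ x in Ioi 0, φ x ^ 2 * x ^ (2 * α - 1) * J x) *
        (1 + (d.toReal / √(∫ x in Ioi 0, φ x ^ 2 * x ^ (2 * α - 1) * J x) / 2) ^ 4) ≤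
      ∫ x in Ioi 0, deriv φ x ^ 2 * x ^ (1 + 2 * α) * J x := by
  have h_adm : HardyAdmissible α J φ := .of_integrableOn hα.le hJ1 hJm hJ hφ hφ' hφ2
  have h_energy : ∫ x, (x * deriv φ x) ^ 2 ∂hardyMeasure α J =
      ∫ x in Ioi 0, deriv φ x ^ 2 * x ^ (1 + 2 * α) * J x := by
    rw [integral_hardyMeasure h_adm.weight_nonneg hJm]
    exact setIntegral_congr_fun measurableSet_Ioi fun x hx => by simp only [sq_mul_mul_rpow hx]
  rw [← h_energy]
  rw [← integral_hardyMeasure h_adm.weight_nonneg hJm] at hpos ⊢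
  have h_ptwise (x : ℝ) (hx : 0 < x) := h_adm.pow_four_rpow_mul_abs_le hα.le hx (hJ1 x hx)
  refine hardy_stability_of_pow_four_le (by nlinarith) hpos ?_
  rw [← ENNReal.toReal_pow]
  refine ENNReal.toReal_le_of_le_ofReal ?_ ((pow_le_pow_left' hd 4).trans ?_)
  · exact (by positivity : 0 ≤ (1 ^ α * |φ 1|) ^ 4).trans (h_ptwise 1 one_pos)
  · exact weakLorentz_pow_le_ofReal (by positivity) four_ne_zero (by simpa using h_ptwise)

section ModelManifold

/-- The radius of the Euclidean ball of volume `t` in `ℝ ^ N`, as it enters `Jfun`. -/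
noncomputable def volumeRadius (N : ℕ) (t : ℝ) : ℝ :=
  ((N : ℝ) * t / omegaN N) ^ ((1 : ℝ) / (N : ℝ))

variable {N : ℕ} {ψ : ℝ → ℝ}

theorem omegaN_pos (hN : 0 < N) : 0 < omegaN N := by
  have := Real.Gamma_pos_of_pos (by positivity : (0 : ℝ) < N / 2)
  unfold omegaN
  positivity

theorem volumeRadius_pos (hN : 0 < N) {t : ℝ} (ht : 0 < t) : 0 < volumeRadius N t := by
  have := omegaN_pos hN
  unfold volumeRadius
  positivity

theorem volumeRadius_monotoneOn (hN : 0 < N) : MonotoneOn (volumeRadius N) (Ioi 0) := by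
  intro s (hs : 0 < s) t _ hst
  have := omegaN_pos hN
  unfold volumeRadius
  gcongr

theorem volumeRadius_contDiffOn (hN : 0 < N) : ContDiffOn ℝ 1 (volumeRadius N) (Ioi 0) := by
  refine ContDiffOn.rpow_const_of_ne (by fun_prop) fun t (ht : 0 < t) => ?_
  have := omegaN_pos hN
  positivity

theorem Jfun_of_pos {t : ℝ} (ht : 0 < t) :
    Jfun N ψ t = (ψ (volumeRadius N t) / volumeRadius N t) ^ (N - 1) :=
  if_neg ht.ne'

theorem monotoneOn_div_self_of_convexOn (hψ : ConvexOn ℝ (Ici 0) ψ) (h0 : ψ 0 = 0) :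
    MonotoneOn (fun r => ψ r / r) (Ioi 0) := by
  intro r (hr : 0 < r) s (hs : 0 < s) hrs
  simpa [h0] using hψ.secant_mono self_mem_Ici hr.le hs.le hr.ne' hs.ne' hrs

theorem deriv_zero_le_div_self_of_convexOn (hψ : ConvexOn ℝ (Ici 0) ψ) (h0 : ψ 0 = 0)
    (hdiff : DifferentiableAt ℝ ψ 0) {r : ℝ} (hr : 0 < r) : deriv ψ 0 ≤ ψ r / r := by
  simpa [slope_def_field, h0] using hψ.deriv_le_slope self_mem_Ici hr.le hr hdiff

theorem convexOn_Ici_zero_of_deriv_deriv_nonneg (hψ : ContDiff ℝ 2 ψ)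
    (h : ∀ r, 0 < r → 0 ≤ deriv (deriv ψ) r) : ConvexOn ℝ (Ici 0) ψ := by
  refine convexOn_of_deriv2_nonneg (convex_Ici 0) hψ.continuous.continuousOn
    (hψ.differentiable two_ne_zero).differentiableOn
    (hψ.differentiable_deriv_two).differentiableOn fun r hr => ?_
  rw [interior_Ici] at hr
  exact h r hr

theorem one_le_Jfun (hN : 0 < N) (hψ : ∀ r, 0 < r → 1 ≤ ψ r / r) {t : ℝ} (ht : 0 < t) :
    1 ≤ Jfun N ψ t := by
  rw [Jfun_of_pos ht]
  exact one_le_pow₀ (hψ _ (volumeRadius_pos hN ht))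

theorem Jfun_monotoneOn (hN : 0 < N) (hψ0 : ∀ r, 0 < r → 0 ≤ ψ r / r)
    (hψ : MonotoneOn (fun r => ψ r / r) (Ioi 0)) : MonotoneOn (Jfun N ψ) (Ioi 0) := by
  intro s (hs : 0 < s) t (ht : 0 < t) hst
  have hrs := volumeRadius_pos hN hs
  rw [Jfun_of_pos hs, Jfun_of_pos ht]
  exact pow_le_pow_left₀ (hψ0 _ hrs)
    (hψ hrs (volumeRadius_pos hN ht) (volumeRadius_monotoneOn hN hs ht hst)) _

theorem Jfun_contDiffOn (hN : 0 < N) (hψ : ContDiff ℝ 1 ψ) : ContDiffOn ℝ 1 (Jfun N ψ) (Ioi 0) :=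
  (((hψ.comp_contDiffOn (volumeRadius_contDiffOn hN)).div (volumeRadius_contDiffOn hN)
    fun _ ht => (volumeRadius_pos hN ht).ne').pow (N - 1)).congr fun _ ht => Jfun_of_pos ht

theorem two_div_Nprime (hN : 0 < N) : 2 / Nprime N = 1 + 2 * (1 / twoStar N) := by
  rw [Nprime, twoStar, one_div_div]
  field_simp
  ring

theorem neg_two_div_natCast (hN : 0 < N) : -2 / (N : ℝ) = 2 * (1 / twoStar N) - 1 := by
  rw [twoStar, one_div_div]
  field_simp
  ring

theorem twoStar_pos (hN : 2 < N) : 0 < twoStar N := by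
  have : (2 : ℝ) < N := mod_cast hN
  have := sub_pos.2 this
  unfold twoStar
  positivity

theorem one_div_twoStar_le_two (hN : 0 < N) : 1 / twoStar N ≤ 2 := by
  rw [twoStar, one_div_div, div_le_iff₀ (by positivity)]
  have : (0 : ℝ) < N := mod_cast hN
  linarith

end ModelManifold

theorem stmt_10_general (N : ℕ) (hN : 3 ≤ N) (ψ : ℝ → ℝ)
    (hψ : ContDiff ℝ 1 ψ) (hconv : ConvexOn ℝ (Ici 0) ψ) (h0 : ψ 0 = 0) (h1 : deriv ψ 0 = 1)
    (φ : ℝ → ℝ)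
    (hac : ∀ a b : ℝ, 0 < a → a ≤ b → φ b - φ a = ∫ t in a..b, deriv φ t)
    (hfin : IntegrableOn
      (fun ϱ => (deriv φ ϱ) ^ 2 * ϱ ^ ((2:ℝ) / Nprime N) * Jfun N ψ ϱ) (Ioi 0))
    (hfin' : IntegrableOn
      (fun ϱ => (φ ϱ) ^ 2 * ϱ ^ (-(2:ℝ) / (N : ℝ)) * Jfun N ψ ϱ) (Ioi 0))
    (hpos' : 0 < ∫ ϱ in Ioi (0:ℝ), (φ ϱ) ^ 2 * ϱ ^ (-(2:ℝ) / (N : ℝ)) * Jfun N ψ ϱ) :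
    (1 / twoStar N) ^ 2 *
      (∫ ϱ in Ioi (0:ℝ), (φ ϱ) ^ 2 * ϱ ^ (-(2:ℝ) / (N : ℝ)) * Jfun N ψ ϱ) *
      (1 +
        (((⨅ a ∈ Ici (0:ℝ),
            weakLorentz (twoStar N)
              (fun ϱ => φ ϱ - a * ϱ ^ (-(1:ℝ) / twoStar N))).toReal /
          √(∫ ϱ in Ioi (0:ℝ), (φ ϱ) ^ 2 * ϱ ^ (-(2:ℝ) / (N : ℝ)) * Jfun N ψ ϱ) / 2) ^ 4))
      ≤ ∫ ϱ in Ioi (0:ℝ), (deriv φ ϱ) ^ 2 * ϱ ^ ((2:ℝ) / Nprime N) * Jfun N ψ ϱ := by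
  have hN0 : 0 < N := by lia
  have one_le_slope (r : ℝ) (hr : 0 < r) : 1 ≤ ψ r / r :=
    h1 ▸ deriv_zero_le_div_self_of_convexOn hconv h0 (hψ.differentiable one_ne_zero 0) hr
  have hJm : MonotoneOn (Jfun N ψ) (Ioi 0) :=
    Jfun_monotoneOn hN0 (fun r hr => zero_le_one.trans (one_le_slope r hr))
      (monotoneOn_div_self_of_convexOn hconv h0)
  have h_inf_le : (⨅ a ∈ Ici (0 : ℝ), weakLorentz (twoStar N)
      fun ϱ => φ ϱ - a * ϱ ^ (-(1 : ℝ) / twoStar N)) ≤ weakLorentz (1 / (1 / twoStar N)) φ :=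
    (iInf₂_le 0 self_mem_Ici).trans_eq (by simp)
  rw [two_div_Nprime hN0] at hfin ⊢
  rw [neg_two_div_natCast hN0] at hfin' hpos' ⊢
  exact weighted_hardy_stability (one_div_pos.2 (twoStar_pos hN)) (one_div_twoStar_le_two hN0)
    (fun _ => one_le_Jfun hN0 one_le_slope) hJm (.of_contDiffOn (Jfun_contDiffOn hN0 hψ))
    hac hfin hfin' hpos' h_inf_le

/-- Quantitative stability of the one-dimensional weighted Hardy
inequality arising from a Cartan–Hadamard model manifold:
`(1/2⋆)² (∫ φ² ϱ^{-2/N} J)(1 + (δ(φ)/2)⁴) ≤ ∫ φ'² ϱ^{2/N'} J`, where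
`δ(φ) = inf_{a ≥ 0} ‖φ - a ϱ^{-1/2⋆}‖_{L^{2⋆,∞}} / (∫ φ² ϱ^{-2/N} J)^{1/2}`. -/
theorem stmt_10 (N : ℕ) (hN : 3 ≤ N) (ψ : ℝ → ℝ)
    (hψ : ContDiff ℝ (⊤ : ℕ∞) ψ) (h0 : ψ 0 = 0) (h1 : deriv ψ 0 = 1)
    (hpos : ∀ r : ℝ, 0 < r → 0 < ψ r)
    (hconv : ∀ r : ℝ, 0 < r → 0 ≤ deriv (deriv ψ) r)
    (φ : ℝ → ℝ) (hφ0 : ∀ ϱ : ℝ, 0 < ϱ → 0 ≤ φ ϱ)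
    (hanti : AntitoneOn φ (Set.Ioi 0))
    (hac : ∀ a b : ℝ, 0 < a → a ≤ b → φ b - φ a = ∫ t in a..b, deriv φ t)
    (hlim : Filter.Tendsto φ Filter.atTop (nhds 0))
    (hfin : IntegrableOn
      (fun ϱ => (deriv φ ϱ) ^ 2 * ϱ ^ ((2:ℝ) / Nprime N) * Jfun N ψ ϱ) (Set.Ioi 0))
    (hfin' : IntegrableOn
      (fun ϱ => (φ ϱ) ^ 2 * ϱ ^ (-(2:ℝ) / (N : ℝ)) * Jfun N ψ ϱ) (Set.Ioi 0))
    (hpos' : 0 < ∫ ϱ in Set.Ioi (0:ℝ), (φ ϱ) ^ 2 * ϱ ^ (-(2:ℝ) / (N : ℝ)) * Jfun N ψ ϱ) :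
    (1 / twoStar N) ^ 2 *
      (∫ ϱ in Set.Ioi (0:ℝ), (φ ϱ) ^ 2 * ϱ ^ (-(2:ℝ) / (N : ℝ)) * Jfun N ψ ϱ) *
      (1 +
        (((⨅ a ∈ Set.Ici (0:ℝ),
            weakLorentz (twoStar N)
              (fun ϱ => φ ϱ - a * ϱ ^ (-(1:ℝ) / twoStar N))).toReal /
          Real.sqrt
            (∫ ϱ in Set.Ioi (0:ℝ),
              (φ ϱ) ^ 2 * ϱ ^ (-(2:ℝ) / (N : ℝ)) * Jfun N ψ ϱ) / 2) ^ 4))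
      ≤ ∫ ϱ in Set.Ioi (0:ℝ), (deriv φ ϱ) ^ 2 * ϱ ^ ((2:ℝ) / Nprime N) * Jfun N ψ ϱ := by
  exact stmt_10_general N hN ψ (contDiff_infty.1 hψ 1)
    (convexOn_Ici_zero_of_deriv_deriv_nonneg (contDiff_infty.1 hψ 2) hconv) h0 h1
    φ hac hfin hfin' hpos'
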